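/- arXiv:1307.5727 — 2 statements merged into one kernel-verified Lean document; each statement's English description precedes it below -/
import Mathlib

section
/- Let D ∈ {3,5} and let H be a planar graph with maximum degree at most D. Then there exists a D-regular planar graph H* that contains H as a subgraph. -/
/-!
A vertex of degree `d < D` is missing `D - d` edges. Each missing edge is supplied by a *gadget*: a
planar graph in which one vertex (the root) has degree `D - 1` and every other vertex has degree
`D`. Joining the root to the deficient vertex by a bridge lowers the total deficit by one, and
induction on the total deficit gives the regular supergraph (`exists_regular_of_gadget`). Since
planarity is defined by excluded minors, two facts have to be proved.

*Bridges preserve planarity* (`IsBridgeCut.isMinor_or`). `K₅` and `K₃,₃` stay connected when a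
vertex is removed. In a minor model in a graph with a bridge it is therefore impossible that one
branch set lies wholly on one side and another wholly on the other side; so all branch sets meet
one common side, and cutting them down to that side gives a model there.

*The gadgets are planar.* For `D = 3` the gadget is `K₄` with a subdivided edge; for `D = 5` it is a
graph with 15 vertices and 37 edges, obtained from a triangulation by deleting two edges. To exclude
minors, a Mac Lane type criterion is used (`IsPlaneDual`): each edge has two faces, face boundaries
are mod-2 cycles, and every mod-2 cycle is the boundary of a set of faces. If `K` had a model in such
a graph, then deleting and contracting down to `K` would leave at least `β + 1` distinct faces with
nonempty boundary, where `β` is the cycle rank of `K`. Each boundary has at least `g` edges, where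
`g` is the girth, and each edge lies on at most two of them, so `g (β + 1) ≤ 2 |E(K)|`. This fails for
`K₅` (`21 > 20`) and for `K₃,₃` (`20 > 18`); see `not_isMinor_of_planeDual`.
-/

open SimpleGraph Filter Asymptotics

/-- `H` is a minor of `G`: to each vertex of `H` we can assign a connected nonempty
branch set in `G`, pairwise disjoint, with an edge of `G` between the branch sets of
any two adjacent vertices of `H`. -/
def IsMinor {α β : Type*} (H : SimpleGraph α) (G : SimpleGraph β) : Prop :=
  ∃ f : α → Set β,
    (∀ a, (G.induce (f a)).Connected) ∧
    (∀ a b, a ≠ b → Disjoint (f a) (f b)) ∧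
    (∀ a b, H.Adj a b → ∃ u ∈ f a, ∃ v ∈ f b, G.Adj u v)

/-- A graph is planar iff it has neither a `K₅`-minor nor a `K₃,₃`-minor
(Wagner's theorem). -/
def IsPlanar {V : Type*} (G : SimpleGraph V) : Prop :=
  ¬ IsMinor (completeGraph (Fin 5)) G ∧
    ¬ IsMinor (completeBipartiteGraph (Fin 3) (Fin 3)) G

/-- The number of edges of a graph. -/
noncomputable def edgeCount {V : Type*} (G : SimpleGraph V) : ℕ :=
  G.edgeSet.ncard

/-- The degree of a vertex. -/
noncomputable def vertexDegree {V : Type*} (G : SimpleGraph V) (v : V) : ℕ :=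
  (G.neighborSet v).ncard

/-- `𝒫(n,m)`: the set of labelled planar graphs on `{1,…,n}` with exactly `m` edges. -/
def planarSet (n m : ℕ) : Set (SimpleGraph (Fin n)) :=
  {G | IsPlanar G ∧ edgeCount G = m}

/-- The probability that the uniform random planar graph `P_{n,m}` satisfies `P`. -/
noncomputable def planarProb (n m : ℕ) (P : SimpleGraph (Fin n) → Prop) : ℝ :=
  ({G ∈ planarSet n m | P G}.ncard : ℝ) / ((planarSet n m).ncard : ℝ)

/-- The number of pendant edges (edges incident to a vertex of degree 1). -/
noncomputable def pendantCount {V : Type*} (G : SimpleGraph V) : ℕ :=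
  {e ∈ G.edgeSet | ∃ v ∈ e, vertexDegree G v = 1}.ncard

/-- The set of addable non-edges of `G`: non-edges whose addition keeps the graph planar. -/
def addableSet {V : Type*} (G : SimpleGraph V) : Set (Sym2 V) :=
  {e | ¬ e.IsDiag ∧ e ∉ G.edgeSet ∧ IsPlanar (G ⊔ SimpleGraph.fromEdgeSet {e})}

/-- `add(n,m)`: the minimum number of addable non-edges over all graphs in `𝒫(n,m)`. -/
noncomputable def addMin (n m : ℕ) : ℕ :=
  sInf ((fun G => (addableSet G).ncard) '' planarSet n m)

/-- `W` carries an induced order-preserving copy of `H` in `G`: the increasing bijection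
from `{1,…,h}` to `W` is an isomorphism between `H` and the induced subgraph `G[W]`. -/
def IsOrderCopy {h n : ℕ} (H : SimpleGraph (Fin h)) (G : SimpleGraph (Fin n))
    (W : Finset (Fin n)) : Prop :=
  ∃ hW : W.card = h,
    ∀ i j : Fin h,
      H.Adj i j ↔ G.Adj ((W.orderIsoOfFin hW i : Fin n)) ((W.orderIsoOfFin hW j : Fin n))

/-- `W` is the vertex set of a connected component of `G`. -/
def IsComponent {V : Type*} (G : SimpleGraph V) (W : Finset V) : Prop :=
  (G.induce (W : Set V)).Connected ∧ ∀ v ∈ W, ∀ u, G.Adj v u → u ∈ W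

/-- The number of components of `G` admitting an order-preserving isomorphism to `H`. -/
noncomputable def numOrderComponents {h n : ℕ} (H : SimpleGraph (Fin h))
    (G : SimpleGraph (Fin n)) : ℕ :=
  {W : Finset (Fin n) | IsComponent G W ∧ IsOrderCopy H G W}.ncard

/-- The number of distinct cycles (as subgraphs, identified with their edge sets) of
length at most `k` in `S`. -/
noncomputable def cycleCountLe {V : Type*} (S : SimpleGraph V) (k : ℕ) : ℕ :=
  {E : Set (Sym2 V) | ∃ (v : V) (c : S.Walk v v),
    c.IsCycle ∧ c.length ≤ k ∧ {e | e ∈ c.edges} = E}.ncard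

/-! ### Mod-2 cycles and faces -/

/-- The mod-2 boundary, evaluated at the vertex `v`, of the edge chain `z` in the multigraph whose
edge `e` has the ends `s e` and `t e`. The chain is a cycle if all these values vanish. -/
def bdry {V E : Type*} [Fintype E] [DecidableEq V] (s t : E → V) (z : E → ZMod 2) (v : V) :
    ZMod 2 :=
  ∑ e, z e * ((if s e = v then 1 else 0) + (if t e = v then 1 else 0))

/-- A combinatorial form of planarity (in the spirit of Mac Lane) for the multigraph whose edge `e`
has the ends `s e` and `t e`: the edge `e` separates the faces `l e` and `r e`, every cycle bounds a
set of faces (`exact`), and every set of faces bounds a cycle (`closed`). Sets of faces are given by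
their indicator functions `F → ZMod 2`. -/
structure IsPlaneDual {V E F : Type*} [Fintype E] [DecidableEq V] (s t : E → V)
    (l r : E → F) : Prop where
  exact : ∀ z : E → ZMod 2, (∀ v, bdry s t z v = 0) →
    ∃ c : F → ZMod 2, ∀ e, z e = c (l e) + c (r e)
  closed : ∀ (c : F → ZMod 2) (v : V), bdry s t (fun e => c (l e) + c (r e)) v = 0

theorem bdry_add {V E : Type*} [Fintype E] [DecidableEq V] (s t : E → V) (y z : E → ZMod 2)
    (v : V) : bdry s t (fun e => y e + z e) v = bdry s t y v + bdry s t z v := by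
  simp only [bdry, add_mul, Finset.sum_add_distrib]

theorem bdry_single {V E : Type*} [Fintype E] [DecidableEq V] [DecidableEq E] (s t : E → V)
    (e : E) (v : V) : bdry s t (fun e' => if e' = e then 1 else 0) v =
      (if s e = v then 1 else 0) + (if t e = v then 1 else 0) := by
  simp [bdry, ite_mul]

theorem zmod_two_add_self (a : ZMod 2) : a + a = 0 := CharTwo.add_self_eq_zero a

/-- A graph with a plane dual has no minor `K` violating Euler's inequality
`g * (β + 1) ≤ 2 * |E(K)|`. The edges of `K` are indexed by `X`, with ends `p` and `q`; the edges
outside `X₀` connect all vertices of `K` (`htree`, stated as an induction principle), so that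
`X₀.card` plays the role of the cycle rank `β`; and every nonzero cycle has at least `g` edges. -/
theorem not_isMinor_of_planeDual {V E F α X : Type*} [Fintype V] [DecidableEq V] [Fintype E]
    [DecidableEq α] [Fintype X] [DecidableEq X]
    {s t : E → V} {l r : E → F} (hd : IsPlaneDual s t l r) {G : SimpleGraph V}
    (hG : ∀ u v, G.Adj u v → ∃ e, (s e = u ∧ t e = v) ∨ (s e = v ∧ t e = u))
    {K : SimpleGraph α} (p q : X → α) (hpq : ∀ x, K.Adj (p x) (q x))
    (hinj : ∀ x y, (p x = p y ∧ q x = q y) ∨ (p x = q y ∧ q x = p y) → x = y)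
    (X₀ : Finset X) (hX₀ : X₀.Nonempty) (a₀ : α)
    (htree : ∀ P : α → Prop, P a₀ → (∀ x ∉ X₀, P (p x) ↔ P (q x)) → ∀ a, P a)
    (g : ℕ)
    (hgirth : ∀ w : X → ZMod 2, (∀ a, bdry p q w a = 0) → w ≠ 0 →
      g ≤ (Finset.univ.filter fun x => w x ≠ 0).card)
    (hcount : 2 * Fintype.card X < g * (X₀.card + 1)) : ¬ IsMinor K G := by
  classical
  rintro ⟨f, hconn, hdisj, hedge⟩
  have uniq : ∀ {v a b}, v ∈ f a → v ∈ f b → a = b := by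
    intro v a b ha hb
    by_contra hne
    exact Set.disjoint_left.1 (hdisj a b hne) ha hb
  have hrep : ∀ x, ∃ e, (s e ∈ f (p x) ∧ t e ∈ f (q x)) ∨ (s e ∈ f (q x) ∧ t e ∈ f (p x)) := by
    intro x
    obtain ⟨u, hu, v, hv, huv⟩ := hedge _ _ (hpq x)
    obtain ⟨e, ⟨rfl, rfl⟩ | ⟨rfl, rfl⟩⟩ := hG u v huv
    · exact ⟨e, Or.inl ⟨hu, hv⟩⟩
    · exact ⟨e, Or.inr ⟨hv, hu⟩⟩
  -- `ρ x` is an edge of `G` representing the edge `x` of `K`.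
  choose ρ hρ using hrep
  have hρinj : Function.Injective ρ := by
    intro x y hxy
    apply hinj
    have hx := hρ x
    have hy := hρ y
    rw [← hxy] at hy
    rcases hx with ⟨h1, h2⟩ | ⟨h1, h2⟩ <;> rcases hy with ⟨h3, h4⟩ | ⟨h3, h4⟩
    · exact Or.inl ⟨uniq h1 h3, uniq h2 h4⟩
    · exact Or.inr ⟨uniq h1 h3, uniq h2 h4⟩
    · exact Or.inr ⟨uniq h2 h4, uniq h1 h3⟩
    · exact Or.inl ⟨uniq h2 h4, uniq h1 h3⟩
  have hρout : ∀ x a, ¬ (s (ρ x) ∈ f a ∧ t (ρ x) ∈ f a) := by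
    rintro x a ⟨h1, h2⟩
    have hne := (hpq x).ne
    rcases hρ x with ⟨h3, h4⟩ | ⟨h3, h4⟩
    · exact hne ((uniq h3 h1).trans (uniq h2 h4))
    · exact hne ((uniq h4 h2).trans (uniq h1 h3))
  -- The edges inside branch sets, together with the representatives of the tree edges of `K`.
  let good : E → Prop := fun e => (∃ a, s e ∈ f a ∧ t e ∈ f a) ∨ ∃ x ∉ X₀, ρ x = e
  -- `u` and `v` are joined by a mod-2 chain of such edges.
  let R : V → V → Prop := fun u v => ∃ z : E → ZMod 2, (∀ e, ¬ good e → z e = 0) ∧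
    ∀ w, bdry s t z w = (if u = w then 1 else 0) + (if v = w then 1 else 0)
  have Rrefl : ∀ u, R u u := fun u => ⟨fun _ => 0, fun _ _ => rfl, fun w => by
    rw [zmod_two_add_self]; simp [bdry]⟩
  have Rsymm : ∀ {u v}, R u v → R v u := by
    rintro u v ⟨z, h1, h2⟩
    exact ⟨z, h1, fun w => by rw [h2, add_comm]⟩
  have Rtrans : ∀ {u v w}, R u v → R v w → R u w := by
    rintro u v w ⟨z, h1, h2⟩ ⟨y, h3, h4⟩
    refine ⟨fun e => z e + y e, fun e he => by simp [h1 e he, h3 e he], fun x => ?_⟩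
    rw [bdry_add, h2, h4]
    linear_combination zmod_two_add_self (if v = x then 1 else 0)
  have Redge : ∀ e, good e → R (s e) (t e) := by
    intro e he
    refine ⟨fun e' => if e' = e then 1 else 0, fun e' he' => ?_, fun w => bdry_single s t e w⟩
    refine if_neg ?_
    rintro rfl
    exact he' he
  have Rbranch : ∀ {a u v}, u ∈ f a → v ∈ f a → R u v := by
    intro a u v hu hv
    obtain ⟨w⟩ := (hconn a).preconnected ⟨u, hu⟩ ⟨v, hv⟩
    have key : ∀ (x y : f a), (G.induce (f a)).Walk x y → R x y := by
      intro x y w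
      induction w with
      | nil => exact Rrefl _
      | @cons x y z hxy _ ih =>
        refine Rtrans ?_ ih
        obtain ⟨e, ⟨h1, h2⟩ | ⟨h1, h2⟩⟩ := hG x y hxy
        · rw [← h1, ← h2]
          exact Redge e (Or.inl ⟨a, h1 ▸ x.2, h2 ▸ y.2⟩)
        · rw [← h1, ← h2]
          exact Rsymm (Redge e (Or.inl ⟨a, h1 ▸ y.2, h2 ▸ x.2⟩))
    exact key _ _ w
  have Rrep : ∀ x ∉ X₀, ∀ u ∈ f (p x), ∀ v ∈ f (q x), R u v := by
    intro x hx u hu v hv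
    have h := Redge (ρ x) (Or.inr ⟨x, hx, rfl⟩)
    rcases hρ x with ⟨h3, h4⟩ | ⟨h3, h4⟩
    · exact Rtrans (Rbranch hu h3) (Rtrans h (Rbranch h4 hv))
    · exact Rtrans (Rbranch hu h4) (Rtrans (Rsymm h) (Rbranch h3 hv))
  have hne : ∀ a, ∃ v, v ∈ f a := fun a => by
    obtain ⟨v⟩ := (hconn a).nonempty
    exact ⟨v.1, v.2⟩
  obtain ⟨u₀, hu₀⟩ := hne a₀
  have Rall : ∀ a, ∀ v ∈ f a, R u₀ v := by
    apply htree (fun a => ∀ v ∈ f a, R u₀ v)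
    · exact fun v hv => Rbranch hu₀ hv
    · intro x hx
      obtain ⟨u, hu⟩ := hne (p x)
      obtain ⟨v, hv⟩ := hne (q x)
      exact ⟨fun h w hw => Rtrans (h u hu) (Rrep x hx u hu w hw),
        fun h w hw => Rtrans (h v hv) (Rsymm (Rrep x hx w hw v hv))⟩
  have hRρ : ∀ x, R (s (ρ x)) (t (ρ x)) := by
    intro x
    rcases hρ x with ⟨h3, h4⟩ | ⟨h3, h4⟩ <;>
    exact Rtrans (Rsymm (Rall _ _ h3)) (Rall _ _ h4)
  -- Fundamental cycles, written as coboundaries of two-colourings of the faces.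
  have hcyc : ∀ x : X₀, ∃ c : F → ZMod 2,
      (∀ x' : X₀, c (l (ρ x')) + c (r (ρ x')) = if x' = x then 1 else 0) ∧
      ∀ e, (¬ ∃ a, s e ∈ f a ∧ t e ∈ f a) → (∀ x, ρ x ≠ e) → c (l e) + c (r e) = 0 := by
    intro x
    obtain ⟨z, hz, hb⟩ := hRρ x
    obtain ⟨c, hc⟩ := hd.exact (fun e => (if e = ρ x then 1 else 0) + z e) (fun v => by
      rw [bdry_add, bdry_single, hb, zmod_two_add_self])
    refine ⟨c, fun x' => ?_, fun e he1 he2 => ?_⟩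
    · rw [← hc, hz, add_zero]
      · simp only [hρinj.eq_iff, Subtype.ext_iff]
      · rintro (⟨a, ha⟩ | ⟨y, hy, hyx⟩)
        · exact hρout _ _ ha
        · rw [hρinj hyx] at hy
          exact hy x'.2
    · rw [← hc, hz, if_neg (fun h => he2 _ h.symm), add_zero]
      rintro (h | ⟨y, -, hy⟩)
      · exact he1 h
      · exact he2 y hy
  choose c hc1 hc2 using hcyc
  -- `Φ` records on which side of each fundamental cycle a face lies. It takes equal values on the two
  -- faces at a deleted edge, so its fibres are unions of the faces of the minor `K`.
  let Φ : F → (X₀ → ZMod 2) := fun φ x => c x φ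
  have hΦρ : ∀ x : X₀, Φ (l (ρ x)) + Φ (r (ρ x)) = Pi.single x 1 := by
    intro x
    funext x'
    simp only [Φ, Pi.add_apply, hc1, Pi.single_apply, eq_comm]
  have hΦdel : ∀ e, (¬ ∃ a, s e ∈ f a ∧ t e ∈ f a) → (∀ x, ρ x ≠ e) → Φ (l e) = Φ (r e) := by
    intro e h1 h2
    funext x
    exact CharTwo.add_eq_zero.1 (hc2 x e h1 h2)
  -- `W y` is the boundary in `K` of the set of faces on which `Φ` equals `y`.
  let δ : (X₀ → ZMod 2) → F → ZMod 2 := fun y φ => if Φ φ = y then 1 else 0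
  let W : (X₀ → ZMod 2) → X → ZMod 2 := fun y x => δ y (l (ρ x)) + δ y (r (ρ x))
  have hW : ∀ y a, bdry p q (W y) a = 0 := by
    intro y a
    have h0 : ∑ v ∈ Finset.univ.filter (· ∈ f a),
        bdry s t (fun e => δ y (l e) + δ y (r e)) v = 0 :=
      Finset.sum_eq_zero fun v _ => hd.closed _ _
    have h1 : ∑ v ∈ Finset.univ.filter (· ∈ f a),
        bdry s t (fun e => δ y (l e) + δ y (r e)) v = ∑ e, (δ y (l e) + δ y (r e)) *
          ((if s e ∈ f a then 1 else 0) + (if t e ∈ f a then 1 else 0)) := by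
      simp only [bdry]
      rw [Finset.sum_comm]
      refine Finset.sum_congr rfl fun e _ => ?_
      rw [← Finset.mul_sum, Finset.sum_add_distrib]
      simp [Finset.sum_ite_eq]
    -- In the sum over all edges, those inside a branch set cancel (both ends count, or neither),
    -- and deleted edges have coefficient zero. Only the representatives `ρ x` remain.
    rw [← h0, h1]
    refine Fintype.sum_of_injective ρ hρinj _ _ ?_ ?_
    · intro e he
      have he' : ∀ x, ρ x ≠ e := fun x hx => he ⟨x, hx⟩
      by_cases hin : ∃ b, s e ∈ f b ∧ t e ∈ f b
      · obtain ⟨b, h1, h2⟩ := hin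
        have : (s e ∈ f a) ↔ (t e ∈ f a) :=
          ⟨fun h => uniq h h1 ▸ h2, fun h => uniq h h2 ▸ h1⟩
        simp only [this, zmod_two_add_self, mul_zero]
      · simp only [δ, hΦdel e hin he', zmod_two_add_self, zero_mul]
    · intro x
      have e1 : ∀ {v b}, v ∈ f b → ((v ∈ f a) ↔ b = a) := fun {v b} h =>
        ⟨fun h' => uniq h h', fun h' => h' ▸ h⟩
      rcases hρ x with ⟨h3, h4⟩ | ⟨h3, h4⟩
      · simp only [W, e1 h3, e1 h4]
      · simp only [W, e1 h3, e1 h4]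
        rw [add_comm (if q x = a then (1 : ZMod 2) else 0)]
  -- The faces of `K` with nonempty boundary; each edge of `K` lies on at most two of them.
  let Y : Finset (X₀ → ZMod 2) := Finset.univ.filter fun y => W y ≠ 0
  have hYcard : Y.card ≤ X₀.card := by
    have h1 : g * Y.card ≤ ∑ y ∈ Y, (Finset.univ.filter fun x => W y x ≠ 0).card := by
      rw [mul_comm, ← smul_eq_mul]
      exact Finset.card_nsmul_le_sum _ _ _ fun y hy => hgirth _ (hW y) (Finset.mem_filter.1 hy).2
    have h2 : ∑ y ∈ Y, (Finset.univ.filter fun x => W y x ≠ 0).card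
        = ∑ x : X, (Y.filter fun y => W y x ≠ 0).card :=
      Finset.sum_card_bipartiteAbove_eq_sum_card_bipartiteBelow (fun y x => W y x ≠ 0)
    have h3 : ∑ x : X, (Y.filter fun y => W y x ≠ 0).card ≤ ∑ _x : X, 2 := by
      refine Finset.sum_le_sum fun x _ => ?_
      refine (Finset.card_le_card (t := {Φ (l (ρ x)), Φ (r (ρ x))}) ?_).trans Finset.card_le_two
      intro y hy
      have hy2 := (Finset.mem_filter.1 hy).2
      by_contra hn
      simp only [Finset.mem_insert, Finset.mem_singleton, not_or] at hn
      apply hy2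
      simp only [W, δ]
      rw [if_neg (Ne.symm hn.1), if_neg (Ne.symm hn.2), add_zero]
    have h4 : ∑ _x : X, 2 = 2 * Fintype.card X := by
      simp [mul_comm]
    have h5 : g * Y.card < g * (X₀.card + 1) := by omega
    exact Nat.lt_succ_iff.1 (lt_of_mul_lt_mul_left h5 (Nat.zero_le _))
  have hΦne : ∀ x : X₀, Φ (l (ρ x)) ≠ Φ (r (ρ x)) := by
    intro x h
    have := hΦρ x
    rw [h] at this
    have h2 := congrFun this x
    simp only [Pi.add_apply, zmod_two_add_self, Pi.single_eq_same] at h2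
    exact zero_ne_one h2
  have hYl : ∀ x : X₀, Φ (l (ρ x)) ∈ Y := by
    intro x
    refine Finset.mem_filter.2 ⟨Finset.mem_univ _, fun h => ?_⟩
    have := congrFun h x
    simp [W, δ, (hΦne x).symm] at this
  have hYr : ∀ x : X₀, Φ (r (ρ x)) ∈ Y := by
    intro x
    refine Finset.mem_filter.2 ⟨Finset.mem_univ _, fun h => ?_⟩
    have := congrFun h x
    simp [W, δ, hΦne x] at this
  -- Differences of elements of `Y` span all unit vectors, hence a space of dimension `X₀.card`; but
  -- they are generated by the `Y.card - 1 < X₀.card` differences with a fixed `y₀`.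
  obtain ⟨x₀, hx₀⟩ := hX₀
  let y₀ := Φ (l (ρ x₀))
  have hy₀ : y₀ ∈ Y := hYl ⟨x₀, hx₀⟩
  let B : Finset (X₀ → ZMod 2) := (Y.erase y₀).image (fun y => y - y₀)
  have hB : ∀ y ∈ Y, y - y₀ ∈ Submodule.span (ZMod 2) (B : Set (X₀ → ZMod 2)) := by
    intro y hy
    by_cases h : y = y₀
    · rw [h, sub_self]
      exact Submodule.zero_mem _
    · exact Submodule.subset_span
        (Finset.mem_coe.2 (Finset.mem_image_of_mem _ (Finset.mem_erase.2 ⟨h, hy⟩)))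
  have htop : Submodule.span (ZMod 2) (B : Set (X₀ → ZMod 2)) = ⊤ := by
    rw [eq_top_iff, ← (Pi.basisFun (ZMod 2) X₀).span_eq, Submodule.span_le]
    rintro _ ⟨x, rfl⟩
    rw [Pi.basisFun_apply, ← hΦρ x]
    have := Submodule.sub_mem _ (hB _ (hYl x)) (hB _ (hYr x))
    rw [sub_sub_sub_cancel_right] at this
    have hneg : -Φ (r (ρ x)) = Φ (r (ρ x)) := funext fun _ => ZMod.neg_eq_self_mod_two _
    rwa [sub_eq_add_neg, hneg] at this
  have hfin := finrank_span_finset_le_card (R := ZMod 2) B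
  have hBc : B.card ≤ Y.card - 1 := by
    rw [← Finset.card_erase_of_mem hy₀]
    exact Finset.card_image_le
  have hdim : Module.finrank (ZMod 2) (X₀ → ZMod 2) = X₀.card := by simp
  have hpos := Finset.card_pos.2 ⟨x₀, hx₀⟩
  have : Set.finrank (ZMod 2) (B : Set (X₀ → ZMod 2)) = X₀.card := by
    rw [Set.finrank, htop, finrank_top, hdim]
  omega

/-- In a mod-2 cycle, every edge of the support is followed at each of its ends by another one. -/
theorem exists_ne_of_bdry {α X : Type*} [Fintype X] [DecidableEq α] {p q : X → α}
    {w : X → ZMod 2} {a : α} (hw : bdry p q w a = 0) {x : X} (hx : w x ≠ 0) (hpq : p x ≠ q x)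
    (ha : p x = a ∨ q x = a) : ∃ y, y ≠ x ∧ w y ≠ 0 ∧ (p y = a ∨ q y = a) := by
  by_contra hn
  push Not at hn
  rw [bdry, Finset.sum_eq_single x] at hw
  · rcases ha with rfl | rfl
    · simp [hpq.symm, hx] at hw
    · simp [hpq, hx] at hw
  · intro y _ hyx
    by_cases hy : w y = 0
    · rw [hy, zero_mul]
    · obtain ⟨h1, h2⟩ := hn y hyx hy
      simp [h1, h2]
  · exact fun h => absurd (Finset.mem_univ x) h

theorem not_isMinor_K5 {V E F : Type*} [Fintype V] [DecidableEq V] [Fintype E]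
    {s t : E → V} {l r : E → F} (hd : IsPlaneDual s t l r) {G : SimpleGraph V}
    (hG : ∀ u v, G.Adj u v → ∃ e, (s e = u ∧ t e = v) ∨ (s e = v ∧ t e = u)) :
    ¬ IsMinor (completeGraph (Fin 5)) G := by
  refine not_isMinor_of_planeDual hd hG (X := Fin 10)
    ![0, 0, 0, 0, 1, 1, 1, 2, 2, 3] ![1, 2, 3, 4, 2, 3, 4, 3, 4, 4]
    (by decide) (by decide) {4, 5, 6, 7, 8, 9} (by decide) 0 ?_ 3 ?_ (by decide)
  · intro P h0 h a
    have h1 := (h 0 (by decide)).1 h0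
    have h2 := (h 1 (by decide)).1 h0
    have h3 := (h 2 (by decide)).1 h0
    have h4 := (h 3 (by decide)).1 h0
    fin_cases a <;> assumption
  · intro w hw hne
    obtain ⟨x, hx⟩ := Function.ne_iff.1 hne
    have hloop := (by decide : ∀ x : Fin 10, (![0, 0, 0, 0, 1, 1, 1, 2, 2, 3] : _ → Fin 5) x ≠
      (![1, 2, 3, 4, 2, 3, 4, 3, 4, 4] : _ → Fin 5) x) x
    -- The edges following `x` at its two ends differ, as there are no parallel edges.
    obtain ⟨y, hyx, hy, hya⟩ := exists_ne_of_bdry (hw _) hx hloop (Or.inl rfl)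
    obtain ⟨z, hzx, hz, hza⟩ := exists_ne_of_bdry (hw _) hx hloop (Or.inr rfl)
    have hyz : y ≠ z := by
      rintro rfl
      clear hw hx hy hz hne hloop
      revert x y
      decide
    have hsub : ({x, y, z} : Finset (Fin 10)) ⊆ Finset.univ.filter fun x => w x ≠ 0 := by
      intro v
      simp only [Finset.mem_insert, Finset.mem_singleton, Finset.mem_filter, Finset.mem_univ,
        true_and]
      rintro (rfl | rfl | rfl) <;> assumption
    refine le_trans ?_ (Finset.card_le_card hsub)
    rw [Finset.card_eq_three.2 ⟨x, y, z, hyx.symm, hzx.symm, hyz, rfl⟩]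

theorem not_isMinor_K33 {V E F : Type*} [Fintype V] [DecidableEq V] [Fintype E]
    {s t : E → V} {l r : E → F} (hd : IsPlaneDual s t l r) {G : SimpleGraph V}
    (hG : ∀ u v, G.Adj u v → ∃ e, (s e = u ∧ t e = v) ∨ (s e = v ∧ t e = u)) :
    ¬ IsMinor (completeBipartiteGraph (Fin 3) (Fin 3)) G := by
  refine not_isMinor_of_planeDual hd hG (X := Fin 3 × Fin 3)
    (fun x => Sum.inl x.1) (fun x => Sum.inr x.2)
    (by simp) (by simp [Prod.ext_iff]) {(1, 1), (1, 2), (2, 1), (2, 2)} (by decide)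
    (Sum.inl 0) ?_ 4 ?_ (by decide)
  · intro P h0 h a
    have h1 : ∀ j, P (Sum.inr j) := fun j =>
      (h (0, j) (by revert j; decide)).1 h0
    rcases a with i | j
    · exact (h (i, 0) (by revert i; decide)).2 (h1 0)
    · exact h1 j
  · intro w hw hne
    obtain ⟨⟨i, j⟩, hx⟩ := Function.ne_iff.1 hne
    have hw' : ∀ a x, w x ≠ 0 → (Sum.inl x.1 = a ∨ Sum.inr x.2 = a) →
        ∃ y, y ≠ x ∧ w y ≠ 0 ∧ ((Sum.inl y.1 : Fin 3 ⊕ Fin 3) = a ∨ Sum.inr y.2 = a) :=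
      fun a x hx ha => exists_ne_of_bdry (hw a) hx (by simp) ha
    -- Continue the edge `(i, j)` at both of its ends, and once more beyond `(i₁, j₁)`.
    obtain ⟨⟨i₁, j₁⟩, hyx, hy, hya⟩ := hw' (Sum.inl i) (i, j) hx (Or.inl rfl)
    obtain ⟨⟨i₂, j₂⟩, hzx, hz, hza⟩ := hw' (Sum.inr j) (i, j) hx (Or.inr rfl)
    obtain ⟨⟨i₃, j₃⟩, hvy, hv, hva⟩ := hw' (Sum.inr j₁) (i₁, j₁) hy (Or.inr rfl)
    simp only [Sum.inl.injEq, Sum.inr.injEq, reduceCtorEq, or_false, false_or] at hya hza hva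
    subst hya hza hva
    have hsub : ({(i₁, j₂), (i₁, j₃), (i₂, j₂), (i₃, j₃)} : Finset (Fin 3 × Fin 3)) ⊆
        Finset.univ.filter fun x => w x ≠ 0 := by
      intro v
      simp only [Finset.mem_insert, Finset.mem_singleton, Finset.mem_filter, Finset.mem_univ,
        true_and]
      rintro (rfl | rfl | rfl | rfl) <;> assumption
    refine le_trans (le_of_eq ?_) (Finset.card_le_card hsub)
    simp only [ne_eq, Prod.mk.injEq, true_and, and_true] at hyx hzx hvy
    rw [Finset.card_insert_of_notMem, Finset.card_insert_of_notMem,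
      Finset.card_insert_of_notMem, Finset.card_singleton] <;> simp <;> grind

/-- A finite certificate for `IsPlaneDual`. `Q φ` is the set of edges crossed by a path in the dual
graph from a base face to `φ`, and `S e` is a set of vertices; the condition `hQS` says that the
closed dual walk formed by `e` and the dual paths to `l e` and `r e` crosses exactly the cut
of `S e`. A cycle meets every cut evenly, so summing it along the dual paths gives a set of faces it
bounds. -/
theorem isPlaneDual_of_cert {V E F : Type*} [Fintype V] [DecidableEq V] [Fintype E]
    [DecidableEq E] [Fintype F] [DecidableEq F] {s t : E → V} {l r : E → F}
    (Q : F → E → ZMod 2) (S : E → V → ZMod 2)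
    (hQS : ∀ e e', Q (l e) e' + Q (r e) e' =
      (if e = e' then 1 else 0) + (S e (s e') + S e (t e')))
    (hF : ∀ (φ : F) (v : V), bdry s t
      (fun e => (if l e = φ then 1 else 0) + (if r e = φ then 1 else 0)) v = 0) :
    IsPlaneDual s t l r where
  exact z hz := by
    refine ⟨fun φ => ∑ e', Q φ e' * z e', fun e => ?_⟩
    have h0 : ∑ v, S e v * bdry s t z v = 0 := Finset.sum_eq_zero fun v _ => by rw [hz, mul_zero]
    have h1 : ∑ v, S e v * bdry s t z v = ∑ e', (S e (s e') + S e (t e')) * z e' := by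
      simp only [bdry, Finset.mul_sum]
      rw [Finset.sum_comm]
      refine Finset.sum_congr rfl fun e' _ => ?_
      simp only [mul_add, mul_ite, mul_one, mul_zero, Finset.sum_add_distrib,
        Finset.sum_ite_eq, Finset.mem_univ, if_true]
      ring
    rw [← Finset.sum_add_distrib]
    simp only [← add_mul, hQS]
    simp only [add_mul _ (S e _ + S e _), Finset.sum_add_distrib, ← h1, h0]
    simp
  closed c v := by
    have h : bdry s t (fun e => c (l e) + c (r e)) v = ∑ φ, c φ * bdry s t
        (fun e => (if l e = φ then 1 else 0) + (if r e = φ then 1 else 0)) v := by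
      simp only [bdry, Finset.mul_sum]
      rw [Finset.sum_comm]
      refine Finset.sum_congr rfl fun e _ => ?_
      simp only [← mul_assoc, ← Finset.sum_mul]
      congr 1
      simp [mul_add, Finset.sum_add_distrib]
    rw [h]
    exact Finset.sum_eq_zero fun φ _ => by rw [hF, mul_zero]

/-! ### The gadgets -/

/-- The simple graph on `Fin n` with the edges `{s e, t e}`. -/
def endsGraph {n m : ℕ} (s t : Fin m → Fin n) : SimpleGraph (Fin n) :=
  SimpleGraph.fromRel fun u v => ∃ e, s e = u ∧ t e = v

instance {n m : ℕ} (s t : Fin m → Fin n) : DecidableRel (endsGraph s t).Adj :=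
  fun u v => inferInstanceAs (Decidable (u ≠ v ∧
    ((∃ e, s e = u ∧ t e = v) ∨ ∃ e, s e = v ∧ t e = u)))

/-- The `i`-th binary digit of `k`, as an element of `ZMod 2`: the indicator function of the set
encoded by the bit mask `k`. -/
def maskBit (k i : ℕ) : ZMod 2 := if k.testBit i then 1 else 0

/-- The certificate of `isPlaneDual_of_cert` with the sets `Q φ` and `S e` given as bit masks. -/
theorem isPlanar_endsGraph {n m k : ℕ} (s t : Fin m → Fin n) (l r : Fin m → Fin k)
    (Q : Fin k → ℕ) (S : Fin m → ℕ)
    (hQS : ∀ e e' : Fin m, maskBit (Q (l e)) e' + maskBit (Q (r e)) e' =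
      (if e = e' then 1 else 0) + (maskBit (S e) (s e') + maskBit (S e) (t e')))
    (hF : ∀ (φ : Fin k) (v : Fin n), bdry s t
      (fun e => (if l e = φ then 1 else 0) + (if r e = φ then 1 else 0)) v = 0) :
    IsPlanar (endsGraph s t) := by
  have hd : IsPlaneDual s t l r := isPlaneDual_of_cert
    (fun φ e => maskBit (Q φ) e) (fun e v => maskBit (S e) v) hQS hF
  have hG : ∀ u v, (endsGraph s t).Adj u v → ∃ e, (s e = u ∧ t e = v) ∨ (s e = v ∧ t e = u) := by
    rintro u v ⟨-, ⟨e, he⟩ | ⟨e, he⟩⟩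
    · exact ⟨e, Or.inl he⟩
    · exact ⟨e, Or.inr he⟩
  exact ⟨not_isMinor_K5 hd hG, not_isMinor_K33 hd hG⟩

theorem vertexDegree_eq_card {n : ℕ} (G : SimpleGraph (Fin n)) [DecidableRel G.Adj] (v : Fin n) :
    vertexDegree G v = (Finset.univ.filter fun u => G.Adj v u).card := by
  rw [vertexDegree, ← Set.ncard_coe_finset]
  congr 1
  ext u
  simp

/-- `Q` is planar, the root `w` has degree `D - 1` (with `D` positive), and all other vertices have
degree `D`. -/
def IsGadget (D : ℕ) {n : ℕ} (Q : SimpleGraph (Fin n)) (w : Fin n) : Prop :=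
  IsPlanar Q ∧ vertexDegree Q w + 1 = D ∧ ∀ v, v ≠ w → vertexDegree Q v = D

/-- `K₄` on `{1, 2, 3, 4}` with the edge between `1` and `2` subdivided by the root `0`. -/
theorem exists_gadget_three : ∃ (n : ℕ) (Q : SimpleGraph (Fin n)) (w : Fin n), IsGadget 3 Q w := by
  refine ⟨5, endsGraph (m := 7) ![0, 0, 1, 2, 1, 2, 3] ![1, 2, 3, 3, 4, 4, 4], 0, ?_, ?_, ?_⟩
  · refine isPlanar_endsGraph (k := 4) _ _ ![0, 0, 0, 0, 1, 1, 2] ![1, 1, 3, 2, 3, 2, 3]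
      ![0, 1, 8, 4] ![0, 1, 0, 0, 2, 5, 8] ?_ ?_
    · decide +kernel
    · unfold bdry
      decide +kernel
  · rw [vertexDegree_eq_card]
    decide +kernel
  · intro v
    rw [vertexDegree_eq_card]
    revert v
    decide +kernel

/-- A plane graph with 15 vertices, 37 edges and 24 faces (22 triangles and 2 quadrilaterals); the
root `0` has degree 4. -/
theorem exists_gadget_five : ∃ (n : ℕ) (Q : SimpleGraph (Fin n)) (w : Fin n), IsGadget 5 Q w := by
  refine ⟨15, endsGraph (m := 37)
    ![0, 0, 0, 0, 1, 1, 1, 1, 1, 2, 2, 2, 2, 3, 3, 3, 3, 3, 4, 4, 4, 4, 5, 5, 5, 6, 7, 7, 8, 8, 8,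
      9, 9, 10, 10, 11, 12]
    ![5, 6, 9, 12, 2, 5, 6, 7, 11, 4, 6, 8, 11, 7, 9, 10, 13, 14, 8, 10, 12, 14, 6, 7, 9, 12, 11,
      13, 10, 11, 13, 12, 14, 13, 14, 13, 14], 0, ?_, ?_, ?_⟩
  · refine isPlanar_endsGraph (k := 24) _ _
      ![0, 2, 1, 3, 4, 6, 7, 8, 5, 9, 4, 10, 11, 12, 14, 15, 13, 16, 17, 18, 9, 19, 0, 6, 12, 2, 8,
        20, 17, 22, 21, 23, 14, 15, 18, 22, 23]
      ![1, 0, 3, 2, 5, 7, 4, 6, 8, 10, 9, 11, 5, 13, 12, 16, 15, 14, 10, 17, 19, 18, 7, 12, 1, 9,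
        20, 13, 21, 11, 22, 3, 23, 21, 16, 20, 19]
      ![0, 1, 2, 5, 4194368, 4194384, 4194336, 4194304, 4194464, 33554434, 33554946, 33556994,
        16777217, 16785409, 16793601, 16850945, 16924673, 33817090, 36700162, 34603010, 151003137,
        8606785537, 34510741505, 2147483653]
      ![0, 0, 0, 1, 0, 0, 0, 0, 2, 0, 64, 0, 68, 0, 0, 8, 0, 0, 0, 16, 0, 0, 0, 32, 0, 0, 160, 0,
        10726, 2278, 8192, 0, 512, 0, 11774, 0, 4097] ?_ ?_
    · decide +kernel
    · unfold bdry
      decide +kernel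
  · rw [vertexDegree_eq_card]
    decide +kernel
  · intro v
    rw [vertexDegree_eq_card]
    revert v
    decide +kernel

/-! ### Minors across a bridge -/

theorem IsMinor.map {α β γ : Type*} {K : SimpleGraph α} {G : SimpleGraph β} {G' : SimpleGraph γ}
    (φ : β → γ) (hφ : Function.Injective φ) (hadj : ∀ u v, G.Adj u v → G'.Adj (φ u) (φ v))
    (h : IsMinor K G) : IsMinor K G' := by
  obtain ⟨f, hconn, hdisj, hedge⟩ := h
  refine ⟨fun a => φ '' f a, fun a => ?_, fun a b hab => ?_, fun a b hab => ?_⟩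
  · let ψ : G.induce (f a) →g G'.induce (φ '' f a) :=
      ⟨fun x => ⟨φ x, Set.mem_image_of_mem φ x.2⟩, fun {x y} hxy => hadj _ _ hxy⟩
    have hψ : Function.Surjective ψ := by
      rintro ⟨_, x, hx, rfl⟩
      exact ⟨⟨x, hx⟩, rfl⟩
    exact (hconn a).map ψ hψ
  · exact (Set.disjoint_image_iff hφ).2 (hdisj a b hab)
  · obtain ⟨u, hu, v, hv, huv⟩ := hedge a b hab
    exact ⟨φ u, Set.mem_image_of_mem φ hu, φ v, Set.mem_image_of_mem φ hv, hadj _ _ huv⟩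

/-- `u ∈ L` and `w ∉ L`, and no edge other than `{u, w}` leaves `L`. -/
def IsBridgeCut {T : Type*} (J : SimpleGraph T) (L : Set T) (u w : T) : Prop :=
  u ∈ L ∧ w ∉ L ∧ ∀ x ∈ L, ∀ y ∉ L, J.Adj x y → x = u ∧ y = w

theorem IsBridgeCut.compl {T : Type*} {J : SimpleGraph T} {L : Set T} {u w : T}
    (h : IsBridgeCut J L u w) : IsBridgeCut J Lᶜ w u :=
  ⟨h.2.1, fun h' => h' h.1, fun x hx y hy hxy =>
    (h.2.2 y (not_not.1 hy) x hx hxy.symm).symm⟩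

/-- A connected set meeting both sides contains both ends of the bridge. -/
theorem IsBridgeCut.mem_of_connected {T : Type*} {J : SimpleGraph T} {L : Set T} {u w : T}
    (h : IsBridgeCut J L u w) {A : Set T} (hA : (J.induce A).Connected)
    {x y : T} (hxA : x ∈ A) (hyA : y ∈ A) (hx : x ∈ L) (hy : y ∉ L) : u ∈ A ∧ w ∈ A := by
  obtain ⟨p⟩ := hA.preconnected ⟨x, hxA⟩ ⟨y, hyA⟩
  have key : ∀ (a b : A), (J.induce A).Walk a b → a.1 ∈ L → b.1 ∉ L → u ∈ A ∧ w ∈ A := by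
    intro a b p
    induction p with
    | nil => exact fun h1 h2 => absurd h1 h2
    | @cons a b c hab _ ih =>
      intro ha hc
      by_cases hb : b.1 ∈ L
      · exact ih hb hc
      · obtain ⟨h1, h2⟩ := h.2.2 _ ha _ hb hab
        exact ⟨h1 ▸ a.2, h2 ▸ b.2⟩
  exact key _ _ p hx hy

theorem IsBridgeCut.connected_inter {T : Type*} {J : SimpleGraph T} {L : Set T} {u w : T}
    (h : IsBridgeCut J L u w) {A : Set T} (hA : (J.induce A).Connected)
    (hne : ∃ x ∈ A, x ∈ L) :
    ((J.induce L).induce (Subtype.val ⁻¹' A : Set L)).Connected := by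
  classical
  obtain ⟨x₀, hx₀, hx₀L⟩ := hne
  -- Retract `A` onto `A ∩ L`, sending everything beyond the bridge to `u`.
  have hu : ∀ x : A, x.1 ∉ L → u ∈ A := fun x hx =>
    (h.mem_of_connected hA hx₀ x.2 hx₀L hx).1
  let ψ : A → (Subtype.val ⁻¹' A : Set L) := fun x =>
    if hx : x.1 ∈ L then ⟨⟨x.1, hx⟩, x.2⟩ else ⟨⟨u, h.1⟩, hu x hx⟩
  have hψ : ∀ x y : A, J.Adj x y →
      ((J.induce L).induce (Subtype.val ⁻¹' A : Set L)).Reachable (ψ x) (ψ y) := by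
    intro x y hxy
    by_cases hx : x.1 ∈ L <;> by_cases hy : y.1 ∈ L
    · simp only [ψ, dif_pos hx, dif_pos hy]
      exact SimpleGraph.Adj.reachable hxy
    · have hxu := (h.2.2 _ hx _ hy hxy).1
      have : ψ x = ψ y := by
        simp only [ψ, dif_pos hx, dif_neg hy]
        exact Subtype.ext (Subtype.ext hxu)
      rw [this]
    · have hyu := (h.2.2 _ hy _ hx hxy.symm).1
      have : ψ x = ψ y := by
        simp only [ψ, dif_neg hx, dif_pos hy]
        exact Subtype.ext (Subtype.ext hyu.symm)
      rw [this]
    · simp only [ψ, dif_neg hx, dif_neg hy]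
      exact SimpleGraph.Reachable.refl _
  have key : ∀ (x y : A), (J.induce A).Walk x y →
      ((J.induce L).induce (Subtype.val ⁻¹' A : Set L)).Reachable (ψ x) (ψ y) := by
    intro x y p
    induction p with
    | nil => exact SimpleGraph.Reachable.refl _
    | cons hab _ ih => exact (hψ _ _ hab).trans ih
  have hid : ∀ x : (Subtype.val ⁻¹' A : Set L), ψ ⟨x.1.1, x.2⟩ = x := by
    intro x
    simp only [ψ, dif_pos x.1.2]
  have : Nonempty (Subtype.val ⁻¹' A : Set L) := ⟨⟨⟨x₀, hx₀L⟩, hx₀⟩⟩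
  refine SimpleGraph.Connected.mk fun x y => ?_
  obtain ⟨p⟩ := hA.preconnected ⟨x.1.1, x.2⟩ ⟨y.1.1, y.2⟩
  have := key _ _ p
  rwa [hid, hid] at this

/-- If every branch set meets `L`, then the traces of the branch sets on `L` form a model. -/
theorem IsBridgeCut.isMinor_side {T α : Type*} {J : SimpleGraph T} {L : Set T} {u w : T}
    (h : IsBridgeCut J L u w) {K : SimpleGraph α} {f : α → Set T}
    (hconn : ∀ a, (J.induce (f a)).Connected) (hdisj : ∀ a b, a ≠ b → Disjoint (f a) (f b))
    (hedge : ∀ a b, K.Adj a b → ∃ u ∈ f a, ∃ v ∈ f b, J.Adj u v)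
    (hL : ∀ a, ∃ x ∈ f a, x ∈ L) : IsMinor K (J.induce L) := by
  have hu : ∀ a, ∀ x ∈ f a, x ∉ L → u ∈ f a := fun a x hx hxL => by
    obtain ⟨y, hy, hyL⟩ := hL a
    exact (h.mem_of_connected (hconn a) hy hx hyL hxL).1
  refine ⟨fun a => Subtype.val ⁻¹' f a, fun a => h.connected_inter (hconn a) (hL a),
    fun a b hab => (hdisj a b hab).preimage _, fun a b hab => ?_⟩
  obtain ⟨x, hx, y, hy, hxy⟩ := hedge a b hab
  have hab' := hdisj a b hab.ne
  by_cases hxL : x ∈ L <;> by_cases hyL : y ∈ L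
  · exact ⟨⟨x, hxL⟩, hx, ⟨y, hyL⟩, hy, hxy⟩
  · obtain rfl := (h.2.2 _ hxL _ hyL hxy).1
    exact absurd (hu b y hy hyL) (Set.disjoint_left.1 hab' hx)
  · obtain rfl := (h.2.2 _ hyL _ hxL hxy.symm).1
    exact absurd hy (Set.disjoint_left.1 hab' (hu a x hx hxL))
  · exact absurd (hu b y hy hyL) (Set.disjoint_left.1 hab' (hu a x hx hxL))

/-- A convenient sufficient condition for 2-connectedness: there are at least three vertices, and any
two vertices other than `a` are joined by a path of length at most two avoiding `a`. -/
def IsRobust {α : Type*} (K : SimpleGraph α) : Prop :=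
  (∀ a b : α, ∃ d, d ≠ a ∧ d ≠ b) ∧
  ∀ a x y : α, x ≠ a → y ≠ a → x ≠ y → K.Adj x y ∨ ∃ z, z ≠ a ∧ K.Adj x z ∧ K.Adj z y

theorem isRobust_K5 : IsRobust (completeGraph (Fin 5)) := by
  unfold IsRobust
  simp only [SimpleGraph.completeGraph_eq_top, SimpleGraph.top_adj]
  decide

theorem isRobust_K33 : IsRobust (completeBipartiteGraph (Fin 3) (Fin 3)) := by
  refine ⟨by decide, fun a x y => ?_⟩
  simp only [completeBipartiteGraph]
  revert a x y
  decide

theorem IsBridgeCut.isMinor_or {T α : Type*} {J : SimpleGraph T} {L : Set T} {u w : T}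
    (h : IsBridgeCut J L u w) {K : SimpleGraph α} (hK : IsRobust K) (hm : IsMinor K J) :
    IsMinor K (J.induce L) ∨ IsMinor K (J.induce Lᶜ) := by
  obtain ⟨f, hconn, hdisj, hedge⟩ := hm
  have uniq : ∀ {v a b}, v ∈ f a → v ∈ f b → a = b := by
    intro v a b ha hb
    by_contra hne
    exact Set.disjoint_left.1 (hdisj a b hne) ha hb
  by_contra hcon
  rw [not_or] at hcon
  have h1 : ∃ b, ∀ x ∈ f b, x ∉ L := by
    by_contra hn
    push Not at hn
    exact hcon.1 (h.isMinor_side hconn hdisj hedge hn)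
  have h2 : ∃ c, ∀ x ∈ f c, x ∈ L := by
    by_contra hn
    push Not at hn
    exact hcon.2 (h.compl.isMinor_side hconn hdisj hedge hn)
  have hne : ∀ a, ∃ v, v ∈ f a := fun a => by
    obtain ⟨v⟩ := (hconn a).nonempty
    exact ⟨v.1, v.2⟩
  -- An edge of `K` between a branch set beyond the bridge and one before it uses the bridge.
  have cross : ∀ b c, (∀ x ∈ f b, x ∉ L) → (∀ x ∈ f c, x ∈ L) → K.Adj b c →
      u ∈ f c ∧ w ∈ f b := by
    intro b c hb hc hbc
    obtain ⟨x, hx, y, hy, hxy⟩ := hedge b c hbc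
    obtain ⟨rfl, rfl⟩ := h.2.2 y (hc y hy) x (hb x hx) hxy.symm
    exact ⟨hy, hx⟩
  have tri : ∀ a, (∀ x ∈ f a, x ∉ L) ∨ (∀ x ∈ f a, x ∈ L) ∨ (u ∈ f a ∧ w ∈ f a) := by
    intro a
    by_cases ha : ∀ x ∈ f a, x ∉ L
    · exact Or.inl ha
    by_cases ha' : ∀ x ∈ f a, x ∈ L
    · exact Or.inr (Or.inl ha')
    push Not at ha ha'
    obtain ⟨x, hx, hxL⟩ := ha
    obtain ⟨y, hy, hyL⟩ := ha'
    exact Or.inr (Or.inr (h.mem_of_connected (hconn a) hx hy hxL hyL))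
  -- Each end of the bridge lies in a branch set other than `f a`, for every `a`
  -- such that there are one-sided branch sets on both sides besides `f a`.
  have avoid : ∀ a b c, (∀ x ∈ f b, x ∉ L) → (∀ x ∈ f c, x ∈ L) → b ≠ a → c ≠ a →
      (∃ a', a' ≠ a ∧ u ∈ f a') ∧ ∃ a', a' ≠ a ∧ w ∈ f a' := by
    intro a b c hb hc hba hca
    have hbc : b ≠ c := by
      rintro rfl
      obtain ⟨v, hv⟩ := hne b
      exact hb v hv (hc v hv)
    rcases hK.2 a b c hba hca hbc with hadj | ⟨z, hza, hbz, hzc⟩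
    · have := cross b c hb hc hadj
      exact ⟨⟨c, hca, this.1⟩, ⟨b, hba, this.2⟩⟩
    · rcases tri z with hz | hz | hz
      · have := cross z c hz hc hzc
        exact ⟨⟨c, hca, this.1⟩, ⟨z, hza, this.2⟩⟩
      · have := cross b z hb hz hbz
        exact ⟨⟨z, hza, this.1⟩, ⟨b, hba, this.2⟩⟩
      · exact ⟨⟨z, hza, hz.1⟩, ⟨z, hza, hz.2⟩⟩
  obtain ⟨b, hb⟩ := h1
  obtain ⟨c, hc⟩ := h2
  obtain ⟨d, hdb, hdc⟩ := hK.1 b c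
  obtain ⟨⟨a₁, -, hu₁⟩, ⟨a₂, -, hw₂⟩⟩ := avoid d b c hb hc hdb.symm hdc.symm
  have e1 : a₁ = b ∨ a₁ = c := by
    by_contra hn
    rw [not_or] at hn
    obtain ⟨⟨a', ha', hu'⟩, -⟩ := avoid a₁ b c hb hc (Ne.symm hn.1) (Ne.symm hn.2)
    exact ha' (uniq hu' hu₁)
  have e2 : a₂ = b ∨ a₂ = c := by
    by_contra hn
    rw [not_or] at hn
    obtain ⟨-, ⟨a', ha', hw'⟩⟩ := avoid a₂ b c hb hc (Ne.symm hn.1) (Ne.symm hn.2)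
    exact ha' (uniq hw' hw₂)
  have huc : u ∈ f c := by
    rcases e1 with rfl | rfl
    · exact absurd h.1 (hb u hu₁)
    · exact hu₁
  have hwb : w ∈ f b := by
    rcases e2 with rfl | rfl
    · exact hw₂
    · exact absurd (hc w hw₂) h.2.1
  have hbc : b ≠ c := by
    rintro rfl
    exact hb u huc h.1
  rcases tri d with hd | hd | hd
  · obtain ⟨-, ⟨a', ha', hw'⟩⟩ := avoid b d c hd hc hdb hbc.symm
    exact ha' (uniq hw' hwb)
  · obtain ⟨⟨a', ha', hu'⟩, -⟩ := avoid c b d hb hd hbc hdc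
    exact ha' (uniq hu' huc)
  · exact hdc (uniq hd.1 huc)

/-! ### Attaching gadgets -/

/-- The disjoint union of `G` and `Q` with the additional edge `{u, w}`. -/
def attach {V W : Type*} (G : SimpleGraph V) (Q : SimpleGraph W) (u : V) (w : W) :
    SimpleGraph (V ⊕ W) where
  Adj x y := match x, y with
    | Sum.inl a, Sum.inl b => G.Adj a b
    | Sum.inr a, Sum.inr b => Q.Adj a b
    | Sum.inl a, Sum.inr b => a = u ∧ b = w
    | Sum.inr b, Sum.inl a => a = u ∧ b = w
  symm := ⟨by
    rintro (a | a) (b | b) h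
    · exact G.adj_symm h
    · exact h
    · exact h
    · exact Q.adj_symm h⟩
  loopless := ⟨by
    rintro (a | a) h
    · exact G.irrefl h
    · exact Q.irrefl h⟩

theorem isBridgeCut_attach {V W : Type*} (G : SimpleGraph V) (Q : SimpleGraph W) (u : V) (w : W) :
    IsBridgeCut (attach G Q u w) (Set.range Sum.inl) (Sum.inl u) (Sum.inr w) := by
  refine ⟨⟨u, rfl⟩, by simp, ?_⟩
  rintro _ ⟨a, rfl⟩ (b | b) hb hab
  · exact absurd ⟨b, rfl⟩ hb
  · obtain ⟨rfl, rfl⟩ : a = u ∧ b = w := hab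
    exact ⟨rfl, rfl⟩

theorem not_isMinor_attach {V W α : Type*} {G : SimpleGraph V} {Q : SimpleGraph W} (u : V) (w : W)
    {K : SimpleGraph α} (hK : IsRobust K) (hG : ¬ IsMinor K G) (hQ : ¬ IsMinor K Q) :
    ¬ IsMinor K (attach G Q u w) := by
  intro hm
  rcases (isBridgeCut_attach G Q u w).isMinor_or hK hm with h | h
  · refine hG (h.map (fun x => Sum.elim id (fun _ => u) x.1) ?_ ?_)
    · rintro ⟨_, a, rfl⟩ ⟨_, b, rfl⟩ hab
      exact Subtype.ext (congrArg Sum.inl hab)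
    · rintro ⟨_, a, rfl⟩ ⟨_, b, rfl⟩ hab
      exact hab
  · refine hQ (h.map (fun x => Sum.elim (fun _ => w) id x.1) ?_ ?_)
    · rintro ⟨a | a, ha⟩ ⟨b | b, hb⟩ hab
      · exact absurd ⟨a, rfl⟩ ha
      · exact absurd ⟨a, rfl⟩ ha
      · exact absurd ⟨b, rfl⟩ hb
      · exact Subtype.ext (congrArg Sum.inr hab)
    · rintro ⟨a | a, ha⟩ ⟨b | b, hb⟩ hab
      · exact absurd ⟨a, rfl⟩ ha
      · exact absurd ⟨a, rfl⟩ ha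
      · exact absurd ⟨b, rfl⟩ hb
      · exact hab

theorem IsPlanar.attach {V W : Type*} {G : SimpleGraph V} {Q : SimpleGraph W} (u : V) (w : W)
    (hG : IsPlanar G) (hQ : IsPlanar Q) : IsPlanar (attach G Q u w) :=
  ⟨not_isMinor_attach u w isRobust_K5 hG.1 hQ.1, not_isMinor_attach u w isRobust_K33 hG.2 hQ.2⟩

theorem vertexDegree_attach_inl {V W : Type*} [Finite V] (G : SimpleGraph V) (Q : SimpleGraph W)
    (u : V) (w : W) [DecidableEq V] (v : V) : vertexDegree (attach G Q u w) (Sum.inl v) =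
      vertexDegree G v + if v = u then 1 else 0 := by
  have h : (attach G Q u w).neighborSet (Sum.inl v) =
      Sum.inl '' G.neighborSet v ∪ if v = u then {Sum.inr w} else ∅ := by
    ext (a | a)
    · split_ifs <;> simp [_root_.attach]
    · split_ifs with hv <;> simp [_root_.attach, hv]
  rw [vertexDegree, h, vertexDegree]
  split_ifs
  · rw [Set.ncard_union_eq (by simp) (Set.toFinite _) (Set.toFinite _),
      Set.ncard_image_of_injective _ Sum.inl_injective, Set.ncard_singleton]
  · rw [Set.union_empty, Set.ncard_image_of_injective _ Sum.inl_injective, add_zero]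

theorem vertexDegree_attach_inr {V W : Type*} [Finite W] (G : SimpleGraph V) (Q : SimpleGraph W)
    (u : V) (w : W) [DecidableEq W] (v : W) : vertexDegree (attach G Q u w) (Sum.inr v) =
      vertexDegree Q v + if v = w then 1 else 0 := by
  have h : (attach G Q u w).neighborSet (Sum.inr v) =
      Sum.inr '' Q.neighborSet v ∪ if v = w then {Sum.inl u} else ∅ := by
    ext (a | a)
    · split_ifs with hv <;> simp [_root_.attach, hv]
    · split_ifs <;> simp [_root_.attach]
  rw [vertexDegree, h, vertexDegree]
  split_ifs
  · rw [Set.ncard_union_eq (by simp) (Set.toFinite _) (Set.toFinite _),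
      Set.ncard_image_of_injective _ Sum.inr_injective, Set.ncard_singleton]
  · rw [Set.union_empty, Set.ncard_image_of_injective _ Sum.inr_injective, add_zero]

/-- Induction on the total deficit `n`: each step attaches one gadget to a deficient vertex. -/
theorem exists_regular_of_gadget {D k : ℕ} {Q : SimpleGraph (Fin k)} {w : Fin k}
    (hQ : IsGadget D Q w) (n : ℕ) : ∀ {V : Type*} [Fintype V] (H : SimpleGraph V),
      IsPlanar H → (∀ v, vertexDegree H v ≤ D) → ∑ v, (D - vertexDegree H v) = n →
      ∃ (N : ℕ) (G : SimpleGraph (Fin N)), IsPlanar G ∧ (∀ v, vertexDegree G v = D) ∧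
        ∃ f : V → Fin N, Function.Injective f ∧ ∀ a b, H.Adj a b → G.Adj (f a) (f b) := by
  classical
  induction n with
  | zero =>
    intro V _ H hH hdeg hsum
    let φ := Fintype.equivFin V
    refine ⟨Fintype.card V, H.comap φ.symm, ?_, fun v => ?_, φ, φ.injective, fun a b hab => ?_⟩
    · exact ⟨fun h => hH.1 (h.map φ.symm φ.symm.injective fun _ _ h => h),
        fun h => hH.2 (h.map φ.symm φ.symm.injective fun _ _ h => h)⟩
    · have h0 := Finset.sum_eq_zero_iff.1 hsum (φ.symm v) (Finset.mem_univ _)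
      have h1 := hdeg (φ.symm v)
      have h2 : vertexDegree (H.comap φ.symm) v = vertexDegree H (φ.symm v) := by
        have : H.neighborSet (φ.symm v) = φ.symm '' (H.comap φ.symm).neighborSet v := by
          ext x
          simp
        rw [vertexDegree, vertexDegree, this, Set.ncard_image_of_injective _ φ.symm.injective]
      omega
    · simpa using hab
  | succ n ih =>
    intro V _ H hH hdeg hsum
    obtain ⟨u, -, hu⟩ : ∃ u ∈ Finset.univ, D - vertexDegree H u ≠ 0 :=
      Finset.exists_ne_zero_of_sum_ne_zero (by omega)
    have hr : ∀ v, vertexDegree (attach H Q u w) (Sum.inr v) = D := by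
      intro v
      rw [vertexDegree_attach_inr]
      split_ifs with hv
      · rw [hv, hQ.2.1]
      · rw [hQ.2.2 v hv, add_zero]
    obtain ⟨N, G, hG, hreg, f, hf, hadj⟩ := ih (attach H Q u w) (hH.attach u w hQ.1) (by
      rintro (v | v)
      · rw [vertexDegree_attach_inl]
        have := hdeg v
        split_ifs with hv
        · subst hv
          omega
        · omega
      · exact (hr v).le) (by
      rw [Fintype.sum_sum_type]
      simp only [hr, vertexDegree_attach_inl, Nat.sub_self, Finset.sum_const_zero, add_zero]
      rw [← Finset.add_sum_erase _ _ (Finset.mem_univ u)] at hsum ⊢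
      have : ∑ x ∈ Finset.univ.erase u, (D - (vertexDegree H x + if x = u then 1 else 0)) =
          ∑ x ∈ Finset.univ.erase u, (D - vertexDegree H x) :=
        Finset.sum_congr rfl fun x hx => by rw [if_neg (Finset.ne_of_mem_erase hx), add_zero]
      rw [this, if_pos rfl]
      omega)
    exact ⟨N, G, hG, hreg, f ∘ Sum.inl, hf.comp Sum.inl_injective,
      fun a b hab => hadj (Sum.inl a) (Sum.inl b) hab⟩

theorem regular_planar_extension (D : ℕ) (hD : D = 3 ∨ D = 5) {V : Type*} [Fintype V]
    (H : SimpleGraph V) (hplanar : IsPlanar H) (hdeg : ∀ v, vertexDegree H v ≤ D) :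
    ∃ (N : ℕ) (G : SimpleGraph (Fin N)),
      IsPlanar G ∧ (∀ v, vertexDegree G v = D) ∧
        ∃ f : V → Fin N, Function.Injective f ∧ ∀ a b, H.Adj a b → G.Adj (f a) (f b) := by
  rcases hD with rfl | rfl
  · obtain ⟨k, Q, w, hQ⟩ := exists_gadget_three
    exact exists_regular_of_gadget hQ _ H hplanar hdeg rfl
  · obtain ⟨k, Q, w, hQ⟩ := exists_gadget_five
    exact exists_regular_of_gadget hQ _ H hplanar hdeg rfl
end

section
/- No 4-regular planar simple graph contains a subgraph isomorphic to K₅ minus an edge, i.e. the graph obtained from the complete graph on 5 vertices by deleting a single edge. -/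
/-!
Let `a, b` be the two vertices of the copy of `K₅ - e` that need not be adjacent, and let `T` be the
triangle formed by the other three. Each vertex of `T` already has its four neighbours in the copy,
so all edges leaving the copy start at `a` or `b`.

Let `C` be the set of vertices reachable from `a` in `G - (T ∪ {b})`. If some vertex of `C` is
adjacent to `b`, then `C`, `{b}` and the three vertices of `T` are the branch sets of a `K₅`-minor.
Otherwise no edge of `G` leaves `C` except the three edges from `a` to `T`, so in the graph that `G`
induces on `C` the vertex `a` has degree `1` and every other vertex has degree `4`; this contradicts
the handshake lemma.
-/

open SimpleGraph Filter Asymptotics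

/-- A vertex adjacent to the four other vertices of the copy has no neighbours outside the copy. -/
lemma neighbor_mem_range {V : Type*} [Fintype V] (G : SimpleGraph V)
    (hreg : ∀ v, vertexDegree G v = 4) (f : Fin 5 → V) (hf : Function.Injective f) (i : Fin 5)
    (hi : ∀ j, j ≠ i → G.Adj (f i) (f j)) (v : V) (hv : G.Adj (f i) v) :
    ∃ j, j ≠ i ∧ f j = v := by
  have hsub : f '' {j | j ≠ i} ⊆ G.neighborSet (f i) := by
    rintro _ ⟨j, hj, rfl⟩
    exact hi j hj
  have hcard : (f '' {j | j ≠ i}).ncard = 4 := by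
    rw [Set.ncard_image_of_injective _ hf, ← Set.compl_singleton_eq, Set.ncard_compl]
    simp
  have heq := Set.eq_of_subset_of_ncard_le hsub
    (by rw [hcard]; exact (hreg (f i)).le) (Set.toFinite _)
  have : v ∈ f '' {j | j ≠ i} := by rw [heq]; exact hv
  exact this

theorem no_K5_minus_edge_in_4_regular_planar {V : Type*} [Fintype V] (G : SimpleGraph V)
    (hplanar : IsPlanar G) (hreg : ∀ v, vertexDegree G v = 4) :
    ¬ ∃ f : Fin 5 → V, Function.Injective f ∧
        ∀ i j : Fin 5,
          ((⊤ : SimpleGraph (Fin 5)).deleteEdges {s(0, 1)}).Adj i j → G.Adj (f i) (f j) := by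
  classical
  rintro ⟨f, hf, hadj⟩
  have hadj' : ∀ i j : Fin 5, i ≠ j → s(i, j) ≠ s(0, 1) → G.Adj (f i) (f j) := by
    intro i j hij hne
    apply hadj
    rw [SimpleGraph.deleteEdges_adj]
    exact ⟨hij, hne⟩
  have hT : ∀ i : Fin 5, i ≠ 0 → i ≠ 1 → ∀ j, j ≠ i → G.Adj (f i) (f j) := by
    intro i h0 h1 j hj
    refine hadj' i j hj.symm ?_
    intro h
    rw [Sym2.eq_iff] at h
    tauto
  have hTn : ∀ i : Fin 5, i ≠ 0 → i ≠ 1 → ∀ v, G.Adj (f i) v → ∃ j, j ≠ i ∧ f j = v :=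
    fun i h0 h1 => neighbor_mem_range G hreg f hf i (hT i h0 h1)
  -- `H` is `G - (T ∪ {b})`, with the deleted vertices kept as isolated vertices.
  let H : SimpleGraph V :=
    { Adj := fun u v => G.Adj u v ∧ (∀ j, j ≠ 0 → f j ≠ u) ∧ (∀ j, j ≠ 0 → f j ≠ v)
      symm := ⟨fun u v h => ⟨h.1.symm, h.2.2, h.2.1⟩⟩
      loopless := ⟨fun u h => G.loopless.irrefl u h.1⟩ }
  let C : Set V := (H.connectedComponentMk (f 0)).supp
  have hCmem : ∀ v, v ∈ C ↔ H.Reachable v (f 0) := fun v => by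
    simp [C, SimpleGraph.ConnectedComponent.mem_supp_iff]
  have haC : f 0 ∈ C := (hCmem _).2 (SimpleGraph.Reachable.refl _)
  have hCavoid : ∀ v ∈ C, ∀ j, j ≠ 0 → f j ≠ v := by
    intro v hv
    by_cases hva : v = f 0
    · subst hva
      exact fun j hj h => hj (hf h)
    · obtain ⟨p⟩ := (hCmem v).1 hv
      cases p with
      | nil => exact absurd rfl hva
      | cons h _ => exact h.2.1
  have hCstep : ∀ u ∈ C, ∀ v, G.Adj u v → (∀ j, j ≠ 0 → f j ≠ v) → v ∈ C := by
    intro u hu v huv hv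
    have h : H.Adj v u := ⟨huv.symm, hv, hCavoid u hu⟩
    exact (hCmem v).2 (h.reachable.trans ((hCmem u).1 hu))
  have hCconn : (G.induce C).Connected := by
    have h := (H.connectedComponentMk (f 0)).connected_toSimpleGraph
    have hle : H.induce C ≤ G.induce C := fun u v huv => huv.1
    exact SimpleGraph.Connected.mono hle h
  by_cases hb : ∃ v ∈ C, G.Adj v (f 1)
  · obtain ⟨v, hvC, hvb⟩ := hb
    apply hplanar.1
    have key : ∀ i j : Fin 5, i < j → ∃ u ∈ (if i = 0 then C else {f i}),
        ∃ w ∈ (if j = 0 then C else {f j}), G.Adj u w := by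
      intro i j hij
      have hj0 : j ≠ 0 := by rintro rfl; exact absurd hij (by simp)
      by_cases hi0 : i = 0
      · subst hi0
        by_cases hj1 : j = 1
        · subst hj1
          exact ⟨v, by simpa using hvC, f 1, by simp, hvb⟩
        · exact ⟨f 0, by simpa using haC, f j, by simp [hj0], (hT j hj0 hj1 0 hj0.symm).symm⟩
      · have hj1 : j ≠ 1 := by rintro rfl; omega
        exact ⟨f i, by simp [hi0], f j, by simp [hj0], (hT j hj0 hj1 i hij.ne).symm⟩
    refine ⟨fun i => if i = 0 then C else {f i}, ?_, ?_, ?_⟩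
    · intro i
      change (G.induce (if i = 0 then C else {f i})).Connected
      by_cases hi : i = 0
      · rw [if_pos hi]
        exact hCconn
      · rw [if_neg hi]
        exact { preconnected := fun u w => by rw [Subsingleton.elim u w] }
    · intro i j hij
      by_cases hi : i = 0
      · have hj : j ≠ 0 := fun h => hij (hi.trans h.symm)
        simp only [hi, hj, if_true, if_false, Set.disjoint_singleton_right]
        exact fun h => hCavoid _ h j hj rfl
      · by_cases hj : j = 0
        · simp only [hi, hj, if_true, if_false, Set.disjoint_singleton_left]
          exact fun h => hCavoid _ h i hi rfl
        · simp only [hi, hj, if_false, Set.disjoint_singleton]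
          exact fun h => hij (hf h)
    · intro i j hij
      have hij' : i ≠ j := hij
      rcases lt_or_gt_of_ne hij' with h | h
      · exact key i j h
      · obtain ⟨u, hu, w, hw, huw⟩ := key j i h
        exact ⟨w, hw, u, hu, huw.symm⟩
  · push Not at hb
    let K : SimpleGraph V :=
      { Adj := fun u v => G.Adj u v ∧ u ∈ C ∧ v ∈ C
        symm := ⟨fun u v h => ⟨h.1.symm, h.2.2, h.2.1⟩⟩
        loopless := ⟨fun u h => G.loopless.irrefl u h.1⟩ }
    have hdeg : ∀ v, K.degree v = (K.neighborSet v).ncard := fun v => by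
      rw [Set.ncard_eq_toFinset_card', ← SimpleGraph.card_neighborFinset_eq_degree]
      rfl
    have hdega : K.degree (f 0) = 1 := by
      have hN : K.neighborSet (f 0) = G.neighborSet (f 0) \ {f 2, f 3, f 4} := by
        ext v
        simp only [SimpleGraph.mem_neighborSet, Set.mem_sdiff, Set.mem_insert_iff,
          Set.mem_singleton_iff, not_or]
        constructor
        · rintro ⟨h, -, hv⟩
          exact ⟨h, fun h => hCavoid v hv 2 (by decide) h.symm,
            fun h => hCavoid v hv 3 (by decide) h.symm, fun h => hCavoid v hv 4 (by decide) h.symm⟩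
        · rintro ⟨h, h2, h3, h4⟩
          refine ⟨h, haC, hCstep _ haC v h ?_⟩
          intro j hj hjv
          subst hjv
          fin_cases j
          · exact hj rfl
          · exact hb _ haC h
          · exact h2 rfl
          · exact h3 rfl
          · exact h4 rfl
      have h3 : ({f 2, f 3, f 4} : Set V).ncard = 3 := by
        rw [Set.ncard_eq_three]
        exact ⟨_, _, _, hf.ne (by decide), hf.ne (by decide), hf.ne (by decide), rfl⟩
      have hsub : ({f 2, f 3, f 4} : Set V) ⊆ G.neighborSet (f 0) := by
        rintro v (rfl | rfl | rfl)
        · exact hadj' 0 2 (by decide) (by decide)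
        · exact hadj' 0 3 (by decide) (by decide)
        · exact hadj' 0 4 (by decide) (by decide)
      have h4 : (G.neighborSet (f 0)).ncard = 4 := hreg (f 0)
      rw [hdeg, hN, Set.ncard_sdiff hsub, h3, h4]
    obtain ⟨w, hwa, hw⟩ := K.exists_ne_odd_degree_of_exists_odd_degree (f 0) (by rw [hdega]; decide)
    have hwC : w ∈ C := by
      obtain ⟨x, hx⟩ := (K.degree_pos_iff_exists_adj w).1 hw.pos
      exact hx.2.1
    have hN : K.neighborSet w = G.neighborSet w := by
      ext v
      simp only [SimpleGraph.mem_neighborSet]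
      refine ⟨fun h => h.1, fun h => ⟨h, hwC, hCstep w hwC v h ?_⟩⟩
      rintro j hj rfl
      by_cases hj1 : j = 1
      · subst hj1
        exact hb w hwC h
      -- A neighbour of a vertex of `T` lies in the copy, and `a` is the only vertex of the copy in `C`.
      · obtain ⟨k, -, hk⟩ := hTn j hj hj1 w h.symm
        by_cases hk0 : k = 0
        · exact hwa (by rw [← hk, hk0])
        · exact hCavoid w hwC k hk0 hk
    have h4 : (G.neighborSet w).ncard = 4 := hreg w
    rw [hdeg, hN, h4] at hw
    exact absurd hw (by decide)
end
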